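/- Given a setting (N,M,q) with m ≥ 4 objects, for every ε > 0 there exist a bound r ∈ (0,1) and a mechanism φ such that φ is r-locally partially strategyproof but φ is not r^{2−ε}-partially strategyproof. -/

import Mathlib

open Finset

/-- A preference order on `M` is a strict total order, represented as a ranking
bijection to `Fin m` (rank `0` is the most preferred object).
`P a < P b` means that `P` ranks `a` above `b`. -/
def Consistent {M : Type*} {m : ℕ} (u : M → ℝ) (P : M ≃ Fin m) : Prop :=
  ∀ a b : M, P a < P b → u b < u a

/-- The minimal utility value `min_{j ∈ M} u(j)`. -/
noncomputable def minU {M : Type*} [Fintype M] [Nonempty M] (u : M → ℝ) : ℝ :=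
  Finset.univ.inf' Finset.univ_nonempty u

/-- `u` satisfies uniformly relatively bounded indifference with respect to `r`. -/
def URBI {M : Type*} [Fintype M] [Nonempty M] (u : M → ℝ) (r : ℝ) : Prop :=
  ∀ a b : M, u b < u a → u b - minU u ≤ r * (u a - minU u)

/-- `P'` is in the neighborhood of `P`: it is obtained from `P` by swapping two
consecutively ranked objects. -/
def Nbhd {M : Type*} {m : ℕ} (P P' : M ≃ Fin m) : Prop :=
  ∃ (k : ℕ) (h : k + 1 < m),
    P' = P.trans (Equiv.swap ⟨k, Nat.lt_of_succ_lt h⟩ ⟨k + 1, h⟩)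

/-- A feasible random assignment mechanism for the setting `(N, M, q)`:
entries are nonnegative, each agent's row sums to one, and no object is
assigned beyond its capacity. -/
def Feasible {N M : Type*} [Fintype N] [Fintype M] {m : ℕ} (q : M → ℕ)
    (φ : (N → M ≃ Fin m) → N → M → ℝ) : Prop :=
  ∀ P : N → M ≃ Fin m,
    (∀ i j, 0 ≤ φ P i j) ∧ (∀ i, ∑ j, φ P i j = 1) ∧ (∀ j, ∑ i, φ P i j ≤ (q j : ℝ))

/-- `φ` is `r`-partially strategyproof. -/
def PSP {N M : Type*} [DecidableEq N] [Fintype M] [Nonempty M] {m : ℕ}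
    (φ : (N → M ≃ Fin m) → N → M → ℝ) (r : ℝ) : Prop :=
  ∀ (P : N → M ≃ Fin m) (i : N) (P' : M ≃ Fin m) (u : M → ℝ),
    (∀ j, 0 ≤ u j) → Consistent u (P i) → URBI u r →
    ∑ j, u j * φ (Function.update P i P') i j ≤ ∑ j, u j * φ P i j

/-- `φ` is `r`-locally partially strategyproof: the incentive constraint is only
required for misreports in the neighborhood of the truthful report. -/
def LocalPSP {N M : Type*} [DecidableEq N] [Fintype M] [Nonempty M] {m : ℕ}
    (φ : (N → M ≃ Fin m) → N → M → ℝ) (r : ℝ) : Prop :=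
  ∀ (P : N → M ≃ Fin m) (i : N) (P' : M ≃ Fin m), Nbhd (P i) P' →
    ∀ u : M → ℝ, (∀ j, 0 ≤ u j) → Consistent u (P i) → URBI u r →
    ∑ j, u j * φ (Function.update P i P') i j ≤ ∑ j, u j * φ P i j


noncomputable def FF {M : Type*} [DecidableEq M] (a b d : M) (k r : ℝ) (t j : M) : ℝ :=
  if t = a then r * (if j = a then 1 else 0) - r * (if j = d then 1 else 0)
  else if t = b then (1 - r + r^2) * (if j = b then 1 else 0)
    - (1 - r + r^2) * (if j = d then 1 else 0)
  else if t = d then k * r * (if j = b then 1 else 0)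
    - r * (1 - (if j = a then 1 else 0) - (if j = b then 1 else 0) - (if j = d then 1 else 0))
  else (r - r^2) * (if j = a then 1 else 0) + (1 - r) * (if j = b then 1 else 0)
    + r^2 * (if j = t then 1 else 0) - (if j = d then 1 else 0)

lemma FF_sum {M : Type*} [Fintype M] [DecidableEq M] (a b d : M) (k r : ℝ) (t : M) (v : M → ℝ) :
    ∑ j, v j * FF a b d k r t j =
      if t = a then r * v a - r * v d
      else if t = b then (1 - r + r^2) * v b - (1 - r + r^2) * v d
      else if t = d then k * r * v b - r * ((∑ j, v j) - v a - v b - v d)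
      else (r - r^2) * v a + (1 - r) * v b + r^2 * v t - v d := by
  have h1 : ∀ x : M, ∑ j, v j * (if j = x then (1:ℝ) else 0) = v x := by
    intro x; simp
  unfold FF
  split_ifs
  · rw [← h1 a, ← h1 d, Finset.mul_sum, Finset.mul_sum, ← Finset.sum_sub_distrib]
    exact Finset.sum_congr rfl fun j _ => by ring
  · rw [← h1 b, ← h1 d, Finset.mul_sum, Finset.mul_sum, ← Finset.sum_sub_distrib]
    exact Finset.sum_congr rfl fun j _ => by ring
  · rw [← h1 a, ← h1 b, ← h1 d, ← Finset.sum_sub_distrib, ← Finset.sum_sub_distrib,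
      ← Finset.sum_sub_distrib, Finset.mul_sum, Finset.mul_sum, ← Finset.sum_sub_distrib]
    exact Finset.sum_congr rfl fun j _ => by ring
  · rw [← h1 a, ← h1 b, ← h1 d, ← h1 t, Finset.mul_sum, Finset.mul_sum, Finset.mul_sum,
      ← Finset.sum_add_distrib, ← Finset.sum_add_distrib, ← Finset.sum_sub_distrib]
    exact Finset.sum_congr rfl fun j _ => by ring

lemma FF_abs {M : Type*} [DecidableEq M] {a b d : M} (hab : a ≠ b) (had : a ≠ d) (hbd : b ≠ d)
    {k r : ℝ} (hk : 1 ≤ k) (hr : 0 < r) (hkr : r * (k + 3) ≤ 1) (t j : M) :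
    |FF a b d k r t j| ≤ 1 := by
  have h1 : r * 4 ≤ 1 := by nlinarith
  have h2 : 0 ≤ k * r := by positivity
  rw [abs_le]
  unfold FF
  split_ifs <;> (try subst_vars) <;> first | (exfalso; tauto) | (constructor <;> nlinarith)

lemma rest_sum {M : Type*} [Fintype M] [DecidableEq M] {a b d : M} (hab : a ≠ b) (had : a ≠ d)
    (hbd : b ≠ d) (v : M → ℝ) :
    (∑ j, v j) - v a - v b - v d = ∑ j ∈ ((Finset.univ.erase a).erase b).erase d, v j := by
  rw [← Finset.add_sum_erase Finset.univ v (Finset.mem_univ a),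
    ← Finset.add_sum_erase (Finset.univ.erase a) v (a := b) (by simp [hab.symm]),
    ← Finset.add_sum_erase ((Finset.univ.erase a).erase b) v (a := d)
      (by simp [hbd.symm, had.symm])]
  ring

lemma core {M : Type*} [Fintype M] [DecidableEq M] {a b d : M} (hab : a ≠ b) (had : a ≠ d)
    (hbd : b ≠ d) {k r : ℝ} (hk : 1 ≤ k) (hcard : (Fintype.card M : ℝ) = k + 3)
    (hr : 0 < r) (hkr : r * (k + 3) ≤ 1) (t w : M) (htw : t ≠ w) (v : M → ℝ)
    (hv : ∀ j, 0 ≤ v j) (hw : v w ≤ r * v t) (ho : ∀ j, j ≠ t → j ≠ w → v j ≤ r^2 * v t) :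
    ∑ j, v j * FF a b d k r w j ≤ ∑ j, v j * FF a b d k r t j := by
  have h4 : r * 4 ≤ 1 := by nlinarith
  have hr2 : r^2 ≤ r := by nlinarith
  have ho' : ∀ j, j ≠ t → v j ≤ r * v t := by
    intro j hj
    by_cases h : j = w
    · rw [h]; exact hw
    · exact (ho j hj h).trans (mul_le_mul_of_nonneg_right hr2 (hv t))
  set Z := (∑ j, v j) - v a - v b - v d with hZ
  have hZs := rest_sum hab had hbd v
  have hZ0 : 0 ≤ Z := by rw [hZ, hZs]; exact Finset.sum_nonneg fun j _ => hv j
  have hZz : ∀ z, z ≠ a → z ≠ b → z ≠ d → v z ≤ Z := by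
    intro z h1 h2 h3
    rw [hZ, hZs]
    exact Finset.single_le_sum (f := v) (fun j _ => hv j) (by simp [h1, h2, h3])
  have hZd : t = d → Z ≤ k * (r * v t) := by
    intro h
    have hc := rest_sum hab had hbd (fun _ => (1:ℝ))
    simp only [Finset.sum_const, nsmul_eq_mul, Finset.card_univ, mul_one] at hc
    rw [hcard] at hc
    rw [hZ, hZs]
    have := Finset.sum_le_card_nsmul (((Finset.univ.erase a).erase b).erase d) v (r * v t)
      (fun j hj => ho' j (by rw [h]; exact (Finset.mem_erase.1 hj).1))
    rw [nsmul_eq_mul, ← hc] at this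
    linarith
  have hvt := hv t
  have hva := hv a
  have hvb := hv b
  have hvd := hv d
  have hvw := hv w
  have hrk : 0 ≤ r * k := by positivity
  have hrv : 0 ≤ r * v t := by positivity
  have hr2v : 0 ≤ r^2 * v t := by positivity
  have h1r : 0 ≤ 1 - r := by linarith
  have hbe : 0 ≤ 1 - r + r^2 := by nlinarith
  have hrr : 0 ≤ r - r^2 := by linarith
  have h1k : 0 ≤ 1 - r - k * r := by nlinarith
  have hpk : 0 ≤ 1 - r - r * k := by nlinarith
  have hpk2 : 0 ≤ r * k * (1 - r) := mul_nonneg hrk h1r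
  have hpk3 : 0 ≤ 1 - r - r * k := by nlinarith
  have hpo : 0 ≤ (1 - r + r^2) - r^2 - r^2 * (1 - r)^2 := by nlinarith [sq_nonneg (1 - r), mul_nonneg hr.le hr.le, mul_nonneg hrr hrr]
  have hp3 : 0 ≤ (1 - r + r^2) - k * r - r * (1 - r + r^2) := by nlinarith [mul_nonneg hr.le hrr]
  have hbk : 0 ≤ (1 - r + r^2) - k * r := by nlinarith
  have hrkr : 0 ≤ r * (r * k) := mul_nonneg hr.le hrk
  have hkk : r * (r * k) ≤ r * k := by nlinarith
  have hp4 : 0 ≤ (1 - r + r^2) - r * (1 - r + r^2 - k * r) - r * (k * r) := by nlinarith [mul_nonneg hr.le hrr]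
  have hp5 : 0 ≤ 1 - r^2 * r - (r - r^2) * r^2 - (1 - r - k * r) * r^2 - r * (k * r) := by
    have e1 : (r - r^2) * r^2 ≤ r := by nlinarith [sq_nonneg r]
    have e2 : (1 - r - k * r) * r^2 ≤ r^2 := by nlinarith [sq_nonneg r]
    have e3 : r^2 * r ≤ r := by nlinarith [sq_nonneg r]
    nlinarith
  rw [FF_sum, FF_sum]
  by_cases ta : t = a
  · subst ta
    have had' := had.symm
    have hab' := hab.symm
    by_cases wb : w = b
    · subst wb
      simp only [if_true, if_neg hab']
      linarith [mul_nonneg (hbe) (sub_nonneg.2 (hw)), mul_nonneg (sq_nonneg (1-r)) (hvd), mul_nonneg (hrr) (hrv)]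
    · by_cases wd : w = d
      · subst wd
        simp only [if_true, if_neg had', if_neg wb]
        linarith [mul_nonneg (hr.le) (sub_nonneg.2 (hw)), mul_nonneg (hrk) (sub_nonneg.2 (ho b (hab.symm) (hbd))), mul_nonneg (hr.le) (hZ0), mul_nonneg (hpk) (hrv), mul_nonneg (hpk2) (hrv)]
      · simp only [if_true, if_neg htw.symm, if_neg wb, if_neg wd]
        linarith [mul_nonneg (sq_nonneg r) (sub_nonneg.2 (hw)), mul_nonneg (h1r) (sub_nonneg.2 (ho b (hab.symm) (Ne.symm wb))), mul_nonneg (h1r) (hvd)]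
  by_cases tb : t = b
  · subst tb
    by_cases wa : w = a
    · subst wa
      simp only [if_true, if_neg ta]
      linarith [mul_nonneg (hr.le) (sub_nonneg.2 (hw)), mul_nonneg (sq_nonneg (1-r)) (sub_nonneg.2 (ho d (hbd.symm) (had.symm))), mul_nonneg (hpo) (hvt)]
    · by_cases wd : w = d
      · subst wd
        simp only [if_true, if_neg ta, if_neg wa, if_neg htw.symm]
        linarith [mul_nonneg (hbe) (sub_nonneg.2 (hw)), mul_nonneg (hr.le) (hZ0), mul_nonneg (hp3) (hvt)]
      · simp only [if_true, if_neg ta, if_neg wa, if_neg htw.symm, if_neg wd]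
        linarith [mul_nonneg (sq_nonneg r) (sub_nonneg.2 (hw)), mul_nonneg (hrr) (sub_nonneg.2 (ho a (hab) (Ne.symm wa))), mul_nonneg (hrr) (hvd), mul_nonneg (sq_nonneg (1-r)) (hr2v)]
  by_cases td : t = d
  · subst td
    have hZd := hZd rfl
    by_cases wa : w = a
    · subst wa
      simp only [if_true, if_neg ta, if_neg tb]
      linarith [mul_nonneg (hr.le) (sub_nonneg.2 (hw)), mul_nonneg (hrk) (hvb), mul_nonneg (hr.le) (sub_nonneg.2 (hZd)), mul_nonneg (hpk3) (hrv)]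
    · by_cases wb : w = b
      · subst wb
        simp only [if_true, if_neg ta, if_neg wa, if_neg tb]
        linarith [mul_nonneg (hbk) (sub_nonneg.2 (hw)), mul_nonneg (hr.le) (sub_nonneg.2 (hZd)), mul_nonneg (hp4) (hvt)]
      · simp only [if_true, if_neg ta, if_neg tb, if_neg wa, if_neg htw.symm, if_neg wb]
        linarith [mul_nonneg (sq_nonneg r) (sub_nonneg.2 (hw)), mul_nonneg (hrr) (sub_nonneg.2 (ho a (had) (Ne.symm wa))), mul_nonneg (h1k) (sub_nonneg.2 (ho b (hbd) (Ne.symm wb))), mul_nonneg (hr.le) (sub_nonneg.2 (hZd)), mul_nonneg (hp5) (hvt)]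
  · have hZt := hZz t ta tb td
    by_cases wa : w = a
    · subst wa
      simp only [if_true, if_neg ta, if_neg tb, if_neg td]
      linarith [mul_nonneg (sq_nonneg r) (sub_nonneg.2 (hw)), mul_nonneg (h1r) (hvb), mul_nonneg (h1r) (sub_nonneg.2 (ho d (Ne.symm td) (had.symm)))]
    · by_cases wb : w = b
      · subst wb
        simp only [if_true, if_neg ta, if_neg wa, if_neg tb, if_neg td]
        linarith [mul_nonneg (sq_nonneg r) (sub_nonneg.2 (hw)), mul_nonneg (hrr) (hva), mul_nonneg (hrr) (sub_nonneg.2 (ho d (Ne.symm td) (hbd.symm))), mul_nonneg (sq_nonneg (1-r)) (hr2v)]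
      · by_cases wd : w = d
        · subst wd
          simp only [if_true, if_neg ta, if_neg tb, if_neg wa, if_neg wb, if_neg td]
          linarith [mul_nonneg (hrr) (hva), mul_nonneg (h1k) (hvb), mul_nonneg (hr.le) (sub_nonneg.2 (hZt)), hr2v, sub_nonneg.2 (hw)]
        · simp only [if_neg ta, if_neg tb, if_neg wa, if_neg wb, if_neg td, if_neg wd]
          linarith [mul_nonneg (sq_nonneg r) (sub_nonneg.2 (hw)), mul_nonneg (h1r) (hr2v)]

lemma FF_zero {M : Type*} [Fintype M] [DecidableEq M] {a b d : M} {k r : ℝ}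
    (hcard : (Fintype.card M : ℝ) = k + 3) (t : M) :
    ∑ j, FF a b d k r t j = 0 := by
  have := FF_sum a b d k r t (fun _ => 1)
  simp only [one_mul, Finset.sum_const, nsmul_eq_mul, Finset.card_univ, mul_one] at this
  rw [this, hcard]
  split_ifs <;> ring

lemma minU_le {M : Type*} [Fintype M] [Nonempty M] (u : M → ℝ) (j : M) : minU u ≤ u j :=
  Finset.inf'_le _ (Finset.mem_univ j)

/-- the incentive constraint of the single-agent perturbation -/
lemma localFF {M : Type*} [Fintype M] [DecidableEq M] [Nonempty M] {a b d : M} (hab : a ≠ b)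
    (had : a ≠ d) (hbd : b ≠ d) {k r : ℝ} (hk : 1 ≤ k) (hcard : (Fintype.card M : ℝ) = k + 3)
    (hr : 0 < r) (hkr : r * (k + 3) ≤ 1) {m : ℕ} (hm4 : 4 ≤ m)
    (P P' : M ≃ Fin m) (hP : Nbhd P P') (u : M → ℝ) (hc : Consistent u P) (hu : URBI u r) :
    ∑ j, u j * FF a b d k r (P'.symm ⟨0, by omega⟩) j
      ≤ ∑ j, u j * FF a b d k r (P.symm ⟨0, by omega⟩) j := by
  obtain ⟨l, hl, rfl⟩ := hP
  rcases Nat.eq_zero_or_pos l with rfl | hl0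
  · have e1 : (P.trans (Equiv.swap (⟨0, Nat.lt_of_succ_lt hl⟩ : Fin m) ⟨0 + 1, hl⟩)).symm
        ⟨0, by omega⟩ = P.symm ⟨1, by omega⟩ := by
      simp
    rw [e1]
    set t := P.symm ⟨0, by omega⟩ with ht
    set w := P.symm ⟨1, by omega⟩ with hw
    have hPt : P t = ⟨0, by omega⟩ := by simp [ht]
    have hPw : P w = ⟨1, by omega⟩ := by simp [hw]
    have htw : t ≠ w := by
      intro h
      rw [h, hPw] at hPt
      simp at hPt
    have hlt : ∀ x y, P x < P y → u y - minU u ≤ r * (u x - minU u) := fun x y h =>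
      hu x y (hc x y h)
    have key := core hab had hbd hk hcard hr hkr t w htw (fun j => u j - minU u)
      (fun j => sub_nonneg.2 (minU_le u j))
      (hlt t w (by rw [hPt, hPw]; simp [Fin.lt_def]))
      (by
        intro j hjt hjw
        have h1 : P j ≠ P t := fun h => hjt (P.injective h)
        have h2 : P j ≠ P w := fun h => hjw (P.injective h)
        rw [hPt, Ne, Fin.ext_iff] at h1
        rw [hPw, Ne, Fin.ext_iff] at h2
        simp only at h1 h2
        have h3 := hlt w j (by rw [hPw, Fin.lt_def]; simp only; omega)
        have h4 := hlt t w (by rw [hPt, hPw]; simp [Fin.lt_def])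
        calc _ ≤ r * (u w - minU u) := h3
          _ ≤ r * (r * (u t - minU u)) := mul_le_mul_of_nonneg_left h4 hr.le
          _ = _ := by ring)
    simp only [sub_mul, Finset.sum_sub_distrib, ← Finset.mul_sum, FF_zero hcard, mul_zero,
      sub_zero] at key
    exact key
  · apply le_of_eq
    congr! 3
    simp only [Equiv.symm_trans_apply, Equiv.symm_swap]
    rw [Equiv.swap_apply_of_ne_of_ne]
    · simp [Fin.ext_iff]; omega
    · simp [Fin.ext_iff]

/-- **Theorem 2 (Tightness).**
Given a setting `(N, M, q)` with `m ≥ 4` objects, for every `ε > 0` there exist a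
bound `r ∈ (0,1)` and a mechanism `φ` such that `φ` is `r`-locally partially
strategyproof but not `r^(2-ε)`-partially strategyproof. -/
theorem tightness
    {N M : Type*} [Fintype N] [DecidableEq N] [Nonempty N]
    [Fintype M] [DecidableEq M] [Nonempty M]
    {m : ℕ} (hm : Fintype.card M = m) (hm4 : 4 ≤ m)
    (q : M → ℕ) (hq : ∀ j, 1 ≤ q j) (hcap : Fintype.card N ≤ ∑ j, q j)
    (ε : ℝ) (hε : 0 < ε) :
    ∃ r ∈ Set.Ioo (0 : ℝ) 1, ∃ φ : (N → M ≃ Fin m) → N → M → ℝ,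
      Feasible q φ ∧ LocalPSP φ r ∧ ¬ PSP φ (r ^ ((2 : ℝ) - ε)) := by
  classical
  have hmR : (4:ℝ) ≤ m := by exact_mod_cast hm4
  obtain ⟨r, hr0, hrm, hre⟩ : ∃ r : ℝ, 0 < r ∧ r * m ≤ 1 ∧ r ^ ε ≤ 1 / 2 := by
    refine ⟨min (1 / (m:ℝ)) ((1/2 : ℝ) ^ (1/ε)), ?_, ?_, ?_⟩
    · apply lt_min <;> positivity
    · calc _ ≤ 1 / (m:ℝ) * m := by gcongr; exact min_le_left _ _
        _ = 1 := by field_simp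
    · calc _ ≤ ((1/2 : ℝ) ^ (1/ε)) ^ ε :=
            Real.rpow_le_rpow (by positivity) (min_le_right _ _) hε.le
        _ = 1 / 2 := by
          rw [← Real.rpow_mul (by norm_num), one_div_mul_cancel hε.ne', Real.rpow_one]
  have hr4 : r * 4 ≤ 1 := by nlinarith
  let e : M ≃ Fin m := Fintype.equivFinOfCardEq hm
  obtain ⟨a, ha⟩ := e.surjective ⟨0, by omega⟩
  obtain ⟨b, hb⟩ := e.surjective ⟨1, by omega⟩
  obtain ⟨c, hc⟩ := e.surjective ⟨2, by omega⟩
  obtain ⟨d, hd⟩ := e.surjective ⟨m - 1, by omega⟩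
  have hab : a ≠ b := by rintro rfl; rw [ha, Fin.ext_iff] at hb; simp at hb
  have had : a ≠ d := by rintro rfl; rw [ha, Fin.ext_iff] at hd; simp at hd; omega
  have hbd : b ≠ d := by rintro rfl; rw [hb, Fin.ext_iff] at hd; simp at hd; omega
  have hca : c ≠ a := by rintro rfl; rw [hc, Fin.ext_iff] at ha; simp at ha
  have hcb : c ≠ b := by rintro rfl; rw [hc, Fin.ext_iff] at hb; simp at hb
  have hcd : c ≠ d := by rintro rfl; rw [hc, Fin.ext_iff] at hd; simp at hd; omega
  set k : ℝ := (m:ℝ) - 3 with hkdef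
  have hk : 1 ≤ k := by linarith
  have hcard : (Fintype.card M : ℝ) = k + 3 := by rw [hm]; simp [hkdef]
  have hkr : r * (k + 3) ≤ 1 := by simpa [hkdef] using hrm
  let F := FF a b d k r
  let i0 : N := Classical.arbitrary N
  set Q : ℝ := ∑ j, (q j : ℝ) with hQ
  have hnQ : (Fintype.card N : ℝ) ≤ Q := by rw [hQ]; exact_mod_cast hcap
  have hn1 : (1:ℝ) ≤ Fintype.card N := by exact_mod_cast Fintype.card_pos
  have hQ0 : 0 < Q := by linarith
  have hq1 : ∀ j, (1:ℝ) ≤ q j := fun j => by exact_mod_cast hq j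
  let cc : N → ℝ := fun i => if i = i0 then 1 else - ((Fintype.card N : ℝ) - 1)⁻¹
  have hcc : ∀ i, |cc i| ≤ 1 := by
    intro i
    by_cases h : i = i0
    · simp [cc, h]
    · have : 1 < Fintype.card N := Fintype.one_lt_card_iff.2 ⟨i, i0, h⟩
      have h2 : (2:ℝ) ≤ Fintype.card N := by exact_mod_cast this
      simp only [cc, if_neg h, abs_neg]
      rw [abs_of_nonneg (by apply inv_nonneg.2; linarith)]
      exact inv_le_one_of_one_le₀ (by linarith)
  have hccs : 1 < Fintype.card N → ∑ i, cc i = 0 := by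
    intro h
    have h2 : (2:ℝ) ≤ Fintype.card N := by exact_mod_cast h
    rw [← Finset.add_sum_erase Finset.univ cc (Finset.mem_univ i0)]
    have : ∑ i ∈ Finset.univ.erase i0, cc i
        = ∑ i ∈ Finset.univ.erase i0, - ((Fintype.card N : ℝ) - 1)⁻¹ :=
      Finset.sum_congr rfl fun i hi => by simp [cc, (Finset.mem_erase.1 hi).1]
    rw [this, Finset.sum_const, Finset.card_erase_of_mem (Finset.mem_univ _), Finset.card_univ,
      nsmul_eq_mul, Nat.cast_sub h.le]
    have : (Fintype.card N : ℝ) - 1 ≠ 0 := by linarith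
    simp only [cc, if_true]
    push_cast
    field_simp
    ring
  let top : (N → M ≃ Fin m) → M := fun P => (P i0).symm ⟨0, by omega⟩
  let φ : (N → M ≃ Fin m) → N → M → ℝ := fun P i j => (q j + cc i * F (top P) j) / Q
  have hF1 : ∀ t j, |F t j| ≤ 1 := FF_abs hab had hbd hk hr0 hkr
  have hF0 : ∀ t, ∑ j, F t j = 0 := FF_zero hcard
  have hnonneg : ∀ P i j, 0 ≤ φ P i j := by
    intro P i j
    apply div_nonneg _ hQ0.le
    have : |cc i * F (top P) j| ≤ 1 := by
      rw [abs_mul]; exact mul_le_one₀ (hcc i) (abs_nonneg _) (hF1 _ _)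
    have := (abs_le.1 this).1
    linarith [hq1 j]
  have hrow : ∀ P i, ∑ j, φ P i j = 1 := by
    intro P i
    simp only [φ]
    rw [← Finset.sum_div, Finset.sum_add_distrib, ← Finset.mul_sum, hF0, mul_zero, add_zero,
      ← hQ, div_self hQ0.ne']
  have hexp : ∀ P i (u : M → ℝ), ∑ j, u j * φ P i j
      = ((∑ j, u j * q j) + cc i * ∑ j, u j * F (top P) j) / Q := by
    intro P i u
    rw [Finset.mul_sum, ← Finset.sum_add_distrib, Finset.sum_div]
    exact Finset.sum_congr rfl fun j _ => by simp only [φ]; ring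
  refine ⟨r, ⟨hr0, by linarith⟩, φ, ?_, ?_, ?_⟩
  · intro P
    refine ⟨hnonneg P, hrow P, ?_⟩
    intro j
    by_cases h : 1 < Fintype.card N
    · simp only [φ]
      rw [← Finset.sum_div, Finset.sum_add_distrib, ← Finset.sum_mul, hccs h, zero_mul, add_zero,
        Finset.sum_const, Finset.card_univ, nsmul_eq_mul, div_le_iff₀ hQ0, mul_comm]
      exact mul_le_mul_of_nonneg_left hnQ (by positivity)
    · have hs : Subsingleton N := Fintype.card_le_one_iff_subsingleton.1 (by omega)
      have : ∑ i, φ P i j = φ P i0 j := by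
        rw [Fintype.sum_eq_single i0]
        intro x hx
        exact absurd (Subsingleton.elim x i0) hx
      rw [this]
      calc φ P i0 j ≤ ∑ j, φ P i0 j :=
            Finset.single_le_sum (fun j _ => hnonneg P i0 j) (Finset.mem_univ j)
        _ = 1 := hrow P i0
        _ ≤ _ := hq1 j
  · intro P i P' hP u _ hcons hurbi
    rw [hexp, hexp]
    by_cases h : i = i0
    · subst h
      have := localFF hab had hbd hk hcard hr0 hkr hm4 _ _ hP u hcons hurbi
      simp only [cc, if_true, one_mul, top, Function.update_self]
      gcongr
    · have : top (Function.update P i P') = top P := by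
        simp only [top]
        rw [Function.update_of_ne (Ne.symm h)]
      rw [this]
  · intro hpsp
    set s : ℝ := 2 * r^2 with hs
    have hs0 : 0 < s := by positivity
    have hs1 : s < 1 := by nlinarith
    have hsr : s ≤ r ^ ((2:ℝ) - ε) := by
      rw [Real.rpow_sub hr0, Real.rpow_two, le_div_iff₀ (by positivity)]
      calc s * r ^ ε ≤ s * (1/2) := by gcongr
        _ = r^2 := by rw [hs]; ring
    let u : M → ℝ := fun j => if j = d then 0 else s ^ (e j : ℕ)
    have hu0 : ∀ j, 0 ≤ u j := by
      intro j; simp only [u]; split_ifs <;> positivity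
    have hmin : minU u = 0 := by
      apply le_antisymm
      · have := minU_le u d
        simpa [u] using this
      · exact Finset.le_inf' _ _ fun j _ => hu0 j
    have hlast : ∀ j, j ≠ d → (e j : ℕ) < m - 1 := by
      intro j hj
      have h1 : e j ≠ e d := fun h => hj (e.injective h)
      rw [hd, Ne, Fin.ext_iff] at h1
      simp only at h1
      have := (e j).2
      omega
    have hcons : Consistent u e := by
      intro x y hxy
      have hx : x ≠ d := by
        rintro rfl
        rw [hd, Fin.lt_def] at hxy
        have := (e y).2
        simp only at hxy
        omega
      simp only [u, if_neg hx]
      split_ifs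
      · positivity
      · exact pow_lt_pow_right_of_lt_one₀ hs0 hs1 hxy
    have hurbi : URBI u (r ^ ((2:ℝ) - ε)) := by
      intro x y hxy
      rw [hmin, sub_zero, sub_zero]
      refine le_trans ?_ (mul_le_mul_of_nonneg_right hsr (hu0 x))
      have hx : x ≠ d := by
        rintro rfl
        have := hu0 y
        simp only [u, if_true] at hxy this
        linarith
      simp only [u, if_neg hx] at hxy ⊢
      split_ifs at hxy ⊢
      · positivity
      · rw [← pow_succ']
        apply pow_le_pow_of_le_one hs0.le hs1.le
        have := (pow_lt_pow_iff_right_of_lt_one₀ hs0 hs1).1 hxy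
        omega
    have key := hpsp (fun _ => e) i0 (e.trans (Equiv.swap (e a) (e c))) u hu0 hcons hurbi
    have t1 : top (fun _ => e) = a := by
      simp only [top]; rw [← ha]; simp
    have t2 : top (Function.update (fun _ => e) i0 (e.trans (Equiv.swap (e a) (e c)))) = c := by
      simp only [top, Function.update_self]; rw [← ha]; simp
    rw [hexp, hexp (fun _ => e) i0 u, t1, t2, div_le_div_iff_of_pos_right hQ0] at key
    simp only [cc, if_true, one_mul, F] at key
    rw [FF_sum, FF_sum] at key
    have ua : u a = 1 := by simp [u, had, ha]
    have ub : u b = s := by simp [u, hbd, hb]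
    have ud : u d = 0 := by simp [u]
    have uc : 0 < u c := by simp only [u, if_neg hcd]; positivity
    simp only [if_true, if_neg hca, if_neg hcb, if_neg hcd, ua, ub, ud] at key
    have : 0 < r^2 * u c := by positivity
    have : r^2 ≤ (1 - r) * s := by rw [hs]; nlinarith [sq_nonneg r]
    linarith
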